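/- Let X_n(x) = max{S_k(x) : S_k(x) ≤ n, k ≥ 0} where S_k = a_1 + ⋯ + a_k are the continued fraction digit sums. Then for every ε ∈ (0,1), λ({x ∈ [0,1] : (n - X_n(x))/n > ε}) ∼ (-log ε)/log n as n → ∞, where λ is Lebesgue measure. -/

import Mathlib

open MeasureTheory Filter

/-- The Gauss map `G(x) = 1/x - ⌊1/x⌋` (with `G 0 = 0`). -/
noncomputable def gaussMap (x : ℝ) : ℝ := if x = 0 then 0 else Int.fract (1 / x)

/-- The digit sum `S_k = a_1 + ⋯ + a_k` of continued fraction digits, `a_{i+1}(x) =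
⌊1 / Gⁱ(x)⌋`. -/
noncomputable def cfDigitSum (x : ℝ) (k : ℕ) : ℕ :=
  ∑ i ∈ Finset.range k, (⌊1 / (gaussMap^[i] x)⌋).toNat

/-- `X_n(x) = max{S_k(x) : S_k(x) ≤ n, k ∈ ℕ₀}`. -/
noncomputable def Xproc (n : ℕ) (x : ℝ) : ℕ :=
  sSup {m : ℕ | m ≤ n ∧ ∃ k : ℕ, cfDigitSum x k = m}


lemma ldA_bound (v : ℕ → ℝ) (hv : ∀ j, 0 ≤ v j)
    (h1 : ∀ n : ℕ, ∑ j ∈ Finset.range (n+1), v j * (1 / (((n - j : ℕ) : ℝ) + 2)) ≤ 1) (n : ℕ) :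
    v n ≤ 2 := by
  have h := h1 n
  have h' := Finset.single_le_sum (f := fun j => v j * (1 / (((n - j : ℕ) : ℝ) + 2)))
    (s := Finset.range (n+1)) (fun i _ => mul_nonneg (hv i) (by positivity))
    (Finset.self_mem_range_succ n)
  simp at h'
  simp at h
  linarith

lemma ldA_summable (v : ℕ → ℝ) (hv : ∀ j, 0 ≤ v j) (hb : ∀ j, v j ≤ 2) (s : ℝ) (h0 : 0 < s)
    (h1 : s < 1) : Summable (fun j => v j * s ^ j) := by
  refine Summable.of_nonneg_of_le (fun j => mul_nonneg (hv j) (by positivity))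
    (fun j => mul_le_mul_of_nonneg_right (hb j) (by positivity)) 
    ((summable_geometric_of_lt_one h0.le h1).mul_left 2)

lemma ldA_cauchy_aux (v g : ℕ → ℝ) (s : ℝ) (n : ℕ) :
    s ^ n * ∑ j ∈ Finset.range (n+1), v j * g (n - j) =
      ∑ k ∈ Finset.range (n + 1), v k * s ^ k * (g (n - k) * s ^ (n - k)) := by
  rw [Finset.mul_sum]
  refine Finset.sum_congr rfl fun j hj => ?_
  have hj' : j ≤ n := by simpa [Nat.lt_succ_iff] using hj
  have : s ^ n = s ^ j * s ^ (n - j) := by rw [← pow_add]; congr 1; omega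
  rw [this]; ring

lemma ldA_cauchy (v g : ℕ → ℝ) (hv : ∀ j, 0 ≤ v j) (hb : ∀ j, v j ≤ 2)
    (hg : ∀ j, 0 ≤ g j) (hgb : ∀ j, g j ≤ 2) (s : ℝ) (h0 : 0 < s) (h1 : s < 1) :
    HasSum (fun n => s ^ n * ∑ j ∈ Finset.range (n+1), v j * g (n - j))
      ((∑' j, v j * s ^ j) * (∑' j, g j * s ^ j)) := by
  have a := ldA_summable v hv hb s h0 h1
  have b := ldA_summable g hg hgb s h0 h1
  have := hasSum_sum_range_mul_of_summable_norm a.norm b.norm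
  have he : (fun n => s ^ n * ∑ j ∈ Finset.range (n+1), v j * g (n - j)) =
      fun n => ∑ k ∈ Finset.range (n + 1), v k * s ^ k * (g (n - k) * s ^ (n - k)) := by
    ext n
    exact ldA_cauchy_aux v g s n
  rw [he]
  exact this

lemma ldA_sums (s : ℝ) (h0 : 0 < s) (h1 : s < 1) :
    (∑' j : ℕ, (1 / ((j : ℝ) + 1)) * s ^ j) = (- Real.log (1 - s)) / s ∧
    (∑' j : ℕ, (1 / ((j : ℝ) + 2)) * s ^ j) = (- Real.log (1 - s) - s) / s ^ 2 := by
  have h := Real.hasSum_pow_div_log_of_abs_lt_one (x := s) (by rw [abs_lt]; constructor <;> linarith)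
  constructor
  · have := (h.mul_right (1 / s)).tsum_eq
    rw [div_eq_mul_one_div (- Real.log (1 - s)), ← this]
    congr 1; ext j; field_simp; ring
  · have h2 := (hasSum_nat_add_iff' 1).2 h
    have := (h2.mul_right (1 / s ^ 2)).tsum_eq
    simp at this
    rw [div_eq_mul_inv, ← this]
    congr 1; ext j
    have : (j : ℝ) + 1 + 1 = j + 2 := by ring
    rw [this]; field_simp; ring

lemma ldA_V (v : ℕ → ℝ) (hv : ∀ j, 0 ≤ v j)
    (h1 : ∀ n : ℕ, ∑ j ∈ Finset.range (n+1), v j * (1 / (((n - j : ℕ) : ℝ) + 2)) ≤ 1)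
    (h2 : ∀ n : ℕ, 1 ≤ ∑ j ∈ Finset.range (n+1), v j * (1 / (((n - j : ℕ) : ℝ) + 1)))
    (s : ℝ) (hs0 : 0 < s) (hs1 : s < 1) :
    s < - Real.log (1 - s) ∧ s / ((1 - s) * (- Real.log (1 - s))) ≤ ∑' j, v j * s ^ j ∧
    ∑' j, v j * s ^ j ≤ s ^ 2 / ((1 - s) * (- Real.log (1 - s) - s)) := by
  have hb := ldA_bound v hv h1
  have hL : s < - Real.log (1 - s) := by
    have := Real.log_lt_sub_one_of_pos (x := 1 - s) (by linarith) (by linarith)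
    linarith
  obtain ⟨e1, e2⟩ := ldA_sums s hs0 hs1
  have geo := hasSum_geometric_of_lt_one hs0.le hs1
  have c1 := ldA_cauchy v (fun j => 1 / ((j : ℝ) + 1)) hv hb (fun j => by positivity)
    (fun j => by rw [div_le_iff₀ (by positivity)]; have : (0:ℝ) ≤ j := by positivity
                 linarith) s hs0 hs1
  have c2 := ldA_cauchy v (fun j => 1 / ((j : ℝ) + 2)) hv hb (fun j => by positivity)
    (fun j => by rw [div_le_iff₀ (by positivity)]; have : (0:ℝ) ≤ j := by positivity
                 linarith) s hs0 hs1
  rw [e1] at c1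
  rw [e2] at c2
  have b1 := hasSum_le (fun n => by
    have := mul_le_mul_of_nonneg_left (h2 n) (pow_nonneg hs0.le n); rw [mul_one] at this; exact this) geo c1
  have b2 := hasSum_le (fun n => by
    have := mul_le_mul_of_nonneg_left (h1 n) (pow_nonneg hs0.le n); rw [mul_one] at this; exact this) c2 geo
  set V := ∑' j, v j * s ^ j
  set l := - Real.log (1 - s)
  have p1 : 0 < 1 - s := by linarith
  have p2 : 0 < l := by linarith
  have p3 : 0 < l - s := by linarith
  refine ⟨hL, ?_, ?_⟩
  · rw [div_le_iff₀ (by positivity)]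
    rw [inv_eq_one_div, mul_div_assoc', div_le_div_iff₀ p1 hs0] at b1
    linarith
  · rw [le_div_iff₀ (by positivity)]
    rw [inv_eq_one_div, mul_div_assoc', div_le_div_iff₀ (by positivity) p1] at b2
    linarith

lemma ldA_n1s (c : ℝ) : Tendsto (fun n : ℕ => (n : ℝ) * (1 - Real.exp (-(c / n)))) atTop (nhds c) := by
  have h : HasDerivAt (fun x : ℝ => Real.exp (-(c * x))) (-c) 0 := by
    have := ((hasDerivAt_id (0:ℝ)).const_mul c).neg.exp
    simpa using this
  have h2 := h.tendsto_slope_zero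
  have h3 : Tendsto (fun n : ℕ => ((n : ℝ))⁻¹) atTop (nhdsWithin 0 {0}ᶜ) := by
    rw [tendsto_nhdsWithin_iff]
    refine ⟨tendsto_inv_atTop_nhds_zero_nat, ?_⟩
    filter_upwards [eventually_gt_atTop 0] with n hn
    simp; omega
  have h4 := (h2.comp h3).neg
  simp at h4
  refine h4.congr fun n => ?_
  simp [div_eq_mul_inv]; ring

lemma ldA_asymp (v : ℕ → ℝ) (hv : ∀ j, 0 ≤ v j)
    (h1 : ∀ n : ℕ, ∑ j ∈ Finset.range (n+1), v j * (1 / (((n - j : ℕ) : ℝ) + 2)) ≤ 1)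
    (h2 : ∀ n : ℕ, 1 ≤ ∑ j ∈ Finset.range (n+1), v j * (1 / (((n - j : ℕ) : ℝ) + 1)))
    (c : ℝ) (hc : 0 < c) :
    Tendsto (fun n : ℕ => Real.log n / n * ∑' j, v j * (Real.exp (-(c / n))) ^ j) atTop
      (nhds (1 / c)) := by
  have hlog : Tendsto (fun n : ℕ => Real.log n) atTop atTop :=
    Real.tendsto_log_atTop.comp tendsto_natCast_atTop_atTop
  have hs : Tendsto (fun n : ℕ => Real.exp (-(c / n))) atTop (nhds 1) := by
    have : Tendsto (fun n : ℕ => -(c / (n:ℝ))) atTop (nhds 0) := by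
      simpa using (tendsto_const_div_atTop_nhds_zero_nat c).neg
    have h0 := (Real.continuous_exp.tendsto 0).comp this
    rw [Real.exp_zero] at h0
    exact h0
  have hn := ldA_n1s c
  have hlr : Tendsto (fun n : ℕ => Real.log ((n : ℝ) * (1 - Real.exp (-(c / n)))) / Real.log n)
      atTop (nhds 0) := ((Real.continuousAt_log hc.ne').tendsto.comp hn).div_atTop hlog
  have hL : Tendsto (fun n : ℕ => (- Real.log (1 - Real.exp (-(c / n)))) / Real.log n) atTop
      (nhds 1) := by
    have := (tendsto_const_nhds (x := (1:ℝ))).sub hlr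
    rw [sub_zero] at this
    refine this.congr' ?_
    filter_upwards [eventually_gt_atTop 1] with n hn
    have hn0 : (1:ℝ) < n := by exact_mod_cast hn
    have : 0 < Real.log n := Real.log_pos hn0
    have h3 : Real.exp (-(c / n)) < 1 := by
      rw [Real.exp_lt_one_iff]; simp; positivity
    rw [Real.log_mul (by positivity) (by linarith)]
    field_simp; ring
  have hL2 : Tendsto (fun n : ℕ => (- Real.log (1 - Real.exp (-(c / n))) - Real.exp (-(c / n)))
      / Real.log n) atTop (nhds 1) := by
    have := hL.sub (hs.div_atTop hlog)
    rw [sub_zero] at this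
    refine this.congr fun n => ?_
    rw [sub_div]
  have lo := (hs.div (hn.mul hL) (by simpa using hc.ne'))
  have hi := ((hs.pow 2).div (hn.mul hL2) (by simpa using hc.ne'))
  simp only [mul_one, one_pow] at lo hi
  have key : ∀ᶠ n : ℕ in atTop, 
      True ∧ 0 < Real.log n ∧ (0:ℝ) < n ∧ 0 < Real.exp (-(c / n)) ∧ Real.exp (-(c / n)) < 1 := by
    filter_upwards [eventually_gt_atTop 1] with n hn
    have hn0 : (1:ℝ) < n := by exact_mod_cast hn
    refine ⟨trivial, Real.log_pos hn0, by linarith, Real.exp_pos _, ?_⟩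
    rw [Real.exp_lt_one_iff]; simp; positivity
  refine tendsto_of_tendsto_of_tendsto_of_le_of_le' lo hi ?_ ?_
  · filter_upwards [key] with n ⟨_, a, b, c1, d⟩
    obtain ⟨e1, e2, e3⟩ := ldA_V v hv h1 h2 _ c1 d
    refine le_trans (le_of_eq ?_) (mul_le_mul_of_nonneg_left e2 (by positivity))
    simp only [Pi.div_apply]
    have : 0 < - Real.log (1 - Real.exp (-(c / n))) := by linarith
    have : Real.log (1 - Real.exp (-(c / n))) ≠ 0 := by linarith
    have : 1 - Real.exp (-(c / n)) ≠ 0 := by linarith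
    field_simp
  · filter_upwards [key] with n ⟨_, a, b, c1, d⟩
    obtain ⟨e1, e2, e3⟩ := ldA_V v hv h1 h2 _ c1 d
    refine le_trans (mul_le_mul_of_nonneg_left e3 (by positivity)) (le_of_eq ?_)
    simp only [Pi.div_apply]
    have : - Real.log (1 - Real.exp (-(c / n))) - Real.exp (-(c / n)) ≠ 0 := by linarith
    have : 1 - Real.exp (-(c / n)) ≠ 0 := by linarith
    field_simp

/-- The weighted sums used in Karamata's argument. -/
noncomputable def ldW (v : ℕ → ℝ) (n : ℕ) (f : ℝ → ℝ) : ℝ :=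
  Real.log n / n * ∑' j, v j * Real.exp (-(1 / (n:ℝ))) ^ j * f (Real.exp (-(1 / (n:ℝ))) ^ j)

lemma ldW_pt (n : ℕ) (hn : 0 < n) : 0 < Real.exp (-(1 / (n:ℝ))) ∧ Real.exp (-(1 / (n:ℝ))) < 1 := by
  refine ⟨Real.exp_pos _, ?_⟩
  rw [Real.exp_lt_one_iff]; simp; exact hn

lemma ldW_mem (n : ℕ) (hn : 0 < n) (j : ℕ) : Real.exp (-(1 / (n:ℝ))) ^ j ∈ Set.Icc (0:ℝ) 1 := by
  obtain ⟨a, b⟩ := ldW_pt n hn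
  exact ⟨by positivity, pow_le_one₀ a.le b.le⟩

lemma ldW_summable (v : ℕ → ℝ) (hv : ∀ j, 0 ≤ v j) (hb : ∀ j, v j ≤ 2) (n : ℕ) (hn : 0 < n)
    (f : ℝ → ℝ) (C : ℝ) (hf : ∀ x ∈ Set.Icc (0:ℝ) 1, |f x| ≤ C) :
    Summable (fun j => v j * Real.exp (-(1 / (n:ℝ))) ^ j * f (Real.exp (-(1 / (n:ℝ))) ^ j)) := by
  obtain ⟨a, b⟩ := ldW_pt n hn
  refine Summable.of_norm_bounded ((ldA_summable v hv hb _ a b).mul_right C) fun j => ?_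
  have h0 : 0 ≤ v j * Real.exp (-(1 / (n:ℝ))) ^ j := mul_nonneg (hv j) (by positivity)
  rw [norm_mul, Real.norm_of_nonneg h0]
  exact mul_le_mul_of_nonneg_left (hf _ (ldW_mem n hn j)) h0

lemma ldW_mono (v : ℕ → ℝ) (hv : ∀ j, 0 ≤ v j) (hb : ∀ j, v j ≤ 2) (n : ℕ) (hn : 0 < n)
    (f g : ℝ → ℝ) (C D : ℝ) (hf : ∀ x ∈ Set.Icc (0:ℝ) 1, |f x| ≤ C)
    (hg : ∀ x ∈ Set.Icc (0:ℝ) 1, |g x| ≤ D) (hfg : ∀ x ∈ Set.Icc (0:ℝ) 1, f x ≤ g x) :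
    ldW v n f ≤ ldW v n g := by
  unfold ldW
  refine mul_le_mul_of_nonneg_left ?_ (div_nonneg (Real.log_natCast_nonneg n) (by positivity))
  refine Summable.tsum_le_tsum (fun j => ?_) (ldW_summable v hv hb n hn f C hf)
    (ldW_summable v hv hb n hn g D hg)
  exact mul_le_mul_of_nonneg_left (hfg _ (ldW_mem n hn j))
    (mul_nonneg (hv j) (ldW_mem n hn j |>.1.trans le_rfl))

lemma ldW_add (v : ℕ → ℝ) (hv : ∀ j, 0 ≤ v j) (hb : ∀ j, v j ≤ 2) (n : ℕ) (hn : 0 < n)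
    (f g : ℝ → ℝ) (C D : ℝ) (hf : ∀ x ∈ Set.Icc (0:ℝ) 1, |f x| ≤ C)
    (hg : ∀ x ∈ Set.Icc (0:ℝ) 1, |g x| ≤ D) :
    ldW v n (fun x => f x + g x) = ldW v n f + ldW v n g := by
  unfold ldW
  rw [← mul_add, ← Summable.tsum_add (ldW_summable v hv hb n hn f C hf)
    (ldW_summable v hv hb n hn g D hg)]
  congr 2; ext j; ring

lemma ldW_smul (v : ℕ → ℝ) (n : ℕ) (f : ℝ → ℝ) (c : ℝ) :
    ldW v n (fun x => c * f x) = c * ldW v n f := by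
  unfold ldW
  simp only [← tsum_mul_left]
  refine tsum_congr fun j => ?_
  ring

lemma ld_bdd (f : ℝ → ℝ) (hf : Continuous f) : ∃ C, ∀ x ∈ Set.Icc (0:ℝ) 1, |f x| ≤ C := by
  simpa using (isCompact_Icc (a := (0:ℝ)) (b := 1)).exists_bound_of_continuousOn hf.continuousOn

lemma ldW_poly (v : ℕ → ℝ) (hv : ∀ j, 0 ≤ v j)
    (h1 : ∀ n : ℕ, ∑ j ∈ Finset.range (n+1), v j * (1 / (((n - j : ℕ) : ℝ) + 2)) ≤ 1)
    (h2 : ∀ n : ℕ, 1 ≤ ∑ j ∈ Finset.range (n+1), v j * (1 / (((n - j : ℕ) : ℝ) + 1)))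
    (p : Polynomial ℝ) :
    Tendsto (fun n : ℕ => ldW v n (fun x => p.eval x)) atTop
      (nhds (∫ x in (0:ℝ)..1, p.eval x)) := by
  have hb := ldA_bound v hv h1
  induction p using Polynomial.induction_on' with
  | add p q hp hq =>
    have := hp.add hq
    rw [← intervalIntegral.integral_add (p.continuous.intervalIntegrable _ _)
      (q.continuous.intervalIntegrable _ _)] at this
    simp only [Polynomial.eval_add]
    refine this.congr' ?_
    filter_upwards [eventually_gt_atTop 0] with n hn
    obtain ⟨C, hC⟩ := ld_bdd _ p.continuous
    obtain ⟨D, hD⟩ := ld_bdd _ q.continuous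
    rw [ldW_add v hv hb n hn _ _ C D hC hD]
  | monomial k a =>
    have h := (ldA_asymp v hv h1 h2 (k + 1) (by positivity)).const_mul a
    simp only [Polynomial.eval_monomial]
    rw [intervalIntegral.integral_const_mul, integral_pow]
    simp only [one_pow, ne_eq, Nat.add_eq_zero_iff, one_ne_zero, and_false, not_false_eq_true,
      zero_pow, sub_zero]
    refine h.congr fun n => ?_
    rw [ldW_smul, ldW]
    congr 2; refine tsum_congr fun j => ?_
    rw [mul_assoc, ← pow_succ', ← pow_mul, mul_comm j, pow_mul]
    congr 2
    rw [← Real.exp_nat_mul]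
    congr 1; push_cast; ring

lemma ldW_cont (v : ℕ → ℝ) (hv : ∀ j, 0 ≤ v j)
    (h1 : ∀ n : ℕ, ∑ j ∈ Finset.range (n+1), v j * (1 / (((n - j : ℕ) : ℝ) + 2)) ≤ 1)
    (h2 : ∀ n : ℕ, 1 ≤ ∑ j ∈ Finset.range (n+1), v j * (1 / (((n - j : ℕ) : ℝ) + 1)))
    (f : ℝ → ℝ) (hf : Continuous f) :
    Tendsto (fun n : ℕ => ldW v n f) atTop (nhds (∫ x in (0:ℝ)..1, f x)) := by
  have hb := ldA_bound v hv h1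
  rw [Metric.tendsto_nhds]
  intro η hη
  obtain ⟨p, hp⟩ := exists_polynomial_near_of_continuousOn 0 1 f hf.continuousOn (η / 5)
    (by positivity)
  have t1 := (Metric.tendsto_nhds.1 (ldW_poly v hv h1 h2 p)) (η / 5) (by positivity)
  have t2 := (Metric.tendsto_nhds.1 (ldW_poly v hv h1 h2 1)) 1 (by positivity)
  have hI : |(∫ x in (0:ℝ)..1, p.eval x) - ∫ x in (0:ℝ)..1, f x| ≤ η / 5 := by
    rw [← intervalIntegral.integral_sub (p.continuous.intervalIntegrable _ _)
      (hf.intervalIntegrable _ _)]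
    have := intervalIntegral.norm_integral_le_of_norm_le_const (a := (0:ℝ)) (b := 1)
      (f := fun x => p.eval x - f x) (C := η / 5) (fun x hx => by
        rw [Set.uIoc_of_le zero_le_one] at hx
        exact (hp x ⟨hx.1.le, hx.2⟩).le)
    simpa using this
  obtain ⟨C, hC⟩ := ld_bdd _ p.continuous
  obtain ⟨D, hD⟩ := ld_bdd _ hf
  filter_upwards [t1, t2, eventually_gt_atTop 0] with n a1 a2 hn
  simp only [Polynomial.eval_one, intervalIntegral.integral_const, sub_zero, smul_eq_mul,
    mul_one] at a2
  rw [Real.dist_eq] at *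
  have one : ∀ x ∈ Set.Icc (0:ℝ) 1, |(fun _ => (1:ℝ)) x| ≤ 1 := by simp
  have hc : ∀ c : ℝ, ∀ x ∈ Set.Icc (0:ℝ) 1, |c * (fun _ => (1:ℝ)) x| ≤ |c| := by simp
  have hcp : ∀ c : ℝ, ∀ x ∈ Set.Icc (0:ℝ) 1, |p.eval x + c * (fun _ => (1:ℝ)) x| ≤ C + |c| :=
    fun c x hx => (abs_add_le _ _).trans (add_le_add (hC x hx) (hc c x hx))
  have u1 : ldW v n f ≤ ldW v n (fun x => p.eval x + (η/5) * (fun _ => (1:ℝ)) x) :=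
    ldW_mono v hv hb n hn _ _ _ _ hD (hcp _) (fun x hx => by
      have := abs_lt.1 (hp x hx); simp only [mul_one]; linarith)
  have u2 : ldW v n (fun x => p.eval x + (-(η/5)) * (fun _ => (1:ℝ)) x) ≤ ldW v n f :=
    ldW_mono v hv hb n hn _ _ _ _ (hcp _) hD (fun x hx => by
      have := abs_lt.1 (hp x hx); simp only [mul_one]; linarith)
  rw [ldW_add v hv hb n hn _ _ _ _ hC (hc _), ldW_smul] at u1 u2
  rw [abs_lt] at *
  rw [abs_le] at hI
  have : (η/5) * ldW v n (fun _ => (1:ℝ)) ≤ (η/5) * 2 :=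
    mul_le_mul_of_nonneg_left (by linarith) (by positivity)
  constructor <;> linarith

/-- Continuous ramp from `0` (left of `a`) to `1` (right of `a + δ`). -/
noncomputable def ldRamp (a δ x : ℝ) : ℝ := max 0 (min 1 ((x - a) / δ))

lemma ldRamp_cont (a δ : ℝ) : Continuous (ldRamp a δ) := by
  unfold ldRamp; fun_prop

lemma ldRamp_int (h : ℝ → ℝ) (hh : Continuous h) (C : ℝ)
    (h0 : ∀ x, 0 ≤ h x) (hC : ∀ x, h x ≤ C) (θ a δ : ℝ) (hδ : 0 < δ)
    (ha : a ≤ θ) (hb : θ ≤ a + δ) (hθ0 : 0 < θ) (hθ1 : θ < 1) :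
    |(∫ x in (0:ℝ)..1, ldRamp a δ x * h x) - ∫ x in θ..1, h x| ≤ C * δ := by
  have e1 : ∫ x in θ..1, h x = ∫ x in Set.Ioc 0 1, (Set.Ioi θ).indicator h x := by
    rw [intervalIntegral.integral_of_le hθ1.le, setIntegral_indicator measurableSet_Ioi]
    congr 2
    ext x
    rw [Set.mem_inter_iff, Set.mem_Ioc, Set.mem_Ioc, Set.mem_Ioi]; constructor
    · rintro ⟨p, q⟩; exact ⟨⟨by linarith, q⟩, p⟩
    · rintro ⟨⟨p, q⟩, r⟩; exact ⟨r, q⟩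
  have hr : Continuous (fun x => ldRamp a δ x * h x) := (ldRamp_cont a δ).mul hh
  have i0 : IntegrableOn h (Set.Ioc 0 1) :=
    (hh.integrableOn_Icc (a := 0) (b := 1)).mono_set Set.Ioc_subset_Icc_self
  rw [e1, intervalIntegral.integral_of_le zero_le_one, ← integral_sub
    ((hr.integrableOn_Icc (a := 0) (b := 1)).mono_set Set.Ioc_subset_Icc_self)
    (i0.integrable.indicator measurableSet_Ioi)]
  have hC0 : 0 ≤ C := (h0 0).trans (hC 0)
  have bound : ∀ x, ‖ldRamp a δ x * h x - (Set.Ioi θ).indicator h x‖ ≤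
      (Set.Icc a (a + δ)).indicator (fun _ => C) x := by
    intro x
    have r0 : 0 ≤ ldRamp a δ x := le_max_left _ _
    have r1 : ldRamp a δ x ≤ 1 := max_le zero_le_one (min_le_left _ _)
    by_cases hx : x ∈ Set.Icc a (a + δ)
    · rw [Set.indicator_of_mem hx, Real.norm_eq_abs, abs_le]
      have := h0 x
      have := hC x
      by_cases hx2 : x ∈ Set.Ioi θ
      · rw [Set.indicator_of_mem hx2]; constructor <;> nlinarith
      · rw [Set.indicator_of_notMem hx2]; constructor <;> nlinarith
    · rw [Set.indicator_of_notMem hx]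
      rw [Set.mem_Icc, not_and_or, not_le, not_le] at hx
      rcases hx with hx | hx
      · have : x ∉ Set.Ioi θ := by simp; linarith
        rw [Set.indicator_of_notMem this]
        have : ldRamp a δ x = 0 := by
          unfold ldRamp
          apply max_eq_left
          refine (min_le_right _ _).trans (div_nonpos_of_nonpos_of_nonneg (by linarith) hδ.le)
        simp [this]
      · have : x ∈ Set.Ioi θ := by simp; linarith
        rw [Set.indicator_of_mem this]
        have : ldRamp a δ x = 1 := by
          unfold ldRamp
          rw [min_eq_left, max_eq_right zero_le_one]
          rw [le_div_iff₀ hδ]; linarith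
        simp [this]
  have ii : Integrable ((Set.Icc a (a + δ)).indicator (fun _ => C)) := by
    rw [integrable_indicator_iff measurableSet_Icc]
    simp
  rw [← Real.norm_eq_abs]
  refine (norm_integral_le_of_norm_le ii.restrict (Eventually.of_forall bound)).trans ?_
  refine (setIntegral_le_integral ii (Eventually.of_forall fun x =>
    Set.indicator_nonneg (fun _ _ => hC0) x)).trans ?_
  rw [integral_indicator measurableSet_Icc]
  simp [hδ.le]
  rw [mul_comm]

lemma ldW_ind (v : ℕ → ℝ) (hv : ∀ j, 0 ≤ v j)
    (h1 : ∀ n : ℕ, ∑ j ∈ Finset.range (n+1), v j * (1 / (((n - j : ℕ) : ℝ) + 2)) ≤ 1)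
    (h2 : ∀ n : ℕ, 1 ≤ ∑ j ∈ Finset.range (n+1), v j * (1 / (((n - j : ℕ) : ℝ) + 1)))
    (h : ℝ → ℝ) (hh : Continuous h) (C : ℝ)
    (h0 : ∀ x, 0 ≤ h x) (hC : ∀ x, h x ≤ C) (θ : ℝ) (hθ0 : 0 < θ) (hθ1 : θ < 1) :
    Tendsto (fun n : ℕ => ldW v n ((Set.Ioi θ).indicator h)) atTop
      (nhds (∫ x in θ..1, h x)) := by
  have hb := ldA_bound v hv h1
  have hC0 : 0 ≤ C := (h0 0).trans (hC 0)
  rw [Metric.tendsto_nhds]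
  intro η hη
  obtain ⟨δ, hδ, hδ2⟩ : ∃ δ > 0, C * δ < η / 2 := by
    refine ⟨η / (2 * (C + 1)) / 2, by positivity, ?_⟩
    rw [div_div, mul_div_assoc', div_lt_div_iff₀ (by positivity) (by positivity)]
    nlinarith
  have b1 := ldRamp_int h hh C h0 hC θ (θ - δ) δ hδ (by linarith) (by linarith) hθ0 hθ1
  have b2 := ldRamp_int h hh C h0 hC θ θ δ hδ (by linarith) (by linarith) hθ0 hθ1
  have t1 := Metric.tendsto_nhds.1 (ldW_cont v hv h1 h2 (fun x => ldRamp (θ - δ) δ x * h x) ((ldRamp_cont (θ - δ) δ).mul hh))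
    (η / 2) (by positivity)
  have t2 := Metric.tendsto_nhds.1 (ldW_cont v hv h1 h2 (fun x => ldRamp θ δ x * h x) ((ldRamp_cont θ δ).mul hh))
    (η / 2) (by positivity)
  have rb : ∀ a, ∀ x ∈ Set.Icc (0:ℝ) 1, |ldRamp a δ x * h x| ≤ C := by
    intro a x _
    have r0 : 0 ≤ ldRamp a δ x := le_max_left _ _
    have r1 : ldRamp a δ x ≤ 1 := max_le zero_le_one (min_le_left _ _)
    have := h0 x
    have := hC x
    rw [abs_of_nonneg (by positivity)]
    nlinarith
  have ib : ∀ x ∈ Set.Icc (0:ℝ) 1, |(Set.Ioi θ).indicator h x| ≤ C := by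
    intro x _
    rw [abs_of_nonneg (Set.indicator_nonneg (fun x _ => h0 x) x)]
    by_cases hx : x ∈ Set.Ioi θ
    · rw [Set.indicator_of_mem hx]; exact hC x
    · rw [Set.indicator_of_notMem hx]; exact hC0
  filter_upwards [t1, t2, eventually_gt_atTop 0] with n a1 a2 hn
  have u1 := ldW_mono v hv hb n hn _ _ _ _ ib (rb (θ - δ)) (by
    intro x _
    by_cases hx : x ∈ Set.Ioi θ
    · rw [Set.indicator_of_mem hx]
      have : ldRamp (θ - δ) δ x = 1 := by
        unfold ldRamp
        rw [min_eq_left, max_eq_right zero_le_one]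
        rw [le_div_iff₀ hδ]; simp at hx; linarith
      rw [this, one_mul]
    · rw [Set.indicator_of_notMem hx]
      exact mul_nonneg (le_max_left _ _) (h0 x))
  have u2 := ldW_mono v hv hb n hn _ _ _ _ (rb θ) ib (by
    intro x _
    by_cases hx : x ∈ Set.Ioi θ
    · rw [Set.indicator_of_mem hx]
      have r1 : ldRamp θ δ x ≤ 1 := max_le zero_le_one (min_le_left _ _)
      exact mul_le_of_le_one_left (h0 x) r1
    · rw [Set.indicator_of_notMem hx]
      have : ldRamp θ δ x = 0 := by
        unfold ldRamp
        apply max_eq_left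
        simp at hx
        refine (min_le_right _ _).trans (div_nonpos_of_nonpos_of_nonneg (by linarith) hδ.le)
      rw [this, zero_mul])
  rw [Real.dist_eq] at *
  rw [abs_lt] at *
  rw [abs_le] at b1 b2
  constructor <;> linarith

/-- The test function for the final sum. -/
noncomputable def ldH (θ u : ℝ) : ℝ := 1 / (max u θ * (1 + Real.log (max u θ)))

lemma ldH_facts (ε : ℝ) (h0 : 0 < ε) (h1 : ε < 1) :
    Continuous (ldH (Real.exp (-(1 - ε)))) ∧ (∀ x, 0 ≤ ldH (Real.exp (-(1 - ε))) x) ∧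
    (∀ x, ldH (Real.exp (-(1 - ε))) x ≤ 1 / (Real.exp (-(1 - ε)) * ε)) ∧
    ∫ x in (Real.exp (-(1 - ε)))..1, ldH (Real.exp (-(1 - ε))) x = - Real.log ε := by
  set θ := Real.exp (-(1 - ε)) with hθ
  have θ0 : 0 < θ := Real.exp_pos _
  have θ1 : θ < 1 := by rw [hθ, Real.exp_lt_one_iff]; linarith
  have m0 : ∀ x, θ ≤ max x θ := fun x => le_max_right _ _
  have l0 : ∀ y, θ ≤ y → ε ≤ 1 + Real.log y := fun y hy => by
    have := Real.log_le_log θ0 hy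
    rw [hθ, Real.log_exp] at this
    linarith
  have pos : ∀ x, θ * ε ≤ max x θ * (1 + Real.log (max x θ)) := fun x =>
    mul_le_mul (m0 x) (l0 _ (m0 x)) h0.le (θ0.le.trans (m0 x))
  have tp : 0 < θ * ε := by positivity
  refine ⟨?_, ?_, ?_, ?_⟩
  · unfold ldH
    refine Continuous.div continuous_const ?_ (fun x => (tp.trans_le (pos x)).ne')
    refine (continuous_id.max continuous_const).mul (continuous_const.add ?_)
    exact (continuous_id.max continuous_const).log (fun x => (θ0.trans_le (m0 x)).ne')
  · intro x; unfold ldH; have := tp.trans_le (pos x); positivity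
  · intro x; unfold ldH
    exact one_div_le_one_div_of_le tp (pos x)
  · have hd : ∀ x ∈ Set.uIcc θ 1, HasDerivAt (fun x => Real.log (1 + Real.log x)) (1 / (x * (1 + Real.log x))) x := by
      intro x hx
      rw [Set.uIcc_of_le θ1.le] at hx
      have x0 : 0 < x := θ0.trans_le hx.1
      have := l0 x hx.1
      convert ((Real.hasDerivAt_log x0.ne').const_add 1).log (by linarith) using 1
      field_simp
    have hc : ∫ x in θ..1, ldH θ x = ∫ x in θ..1, 1 / (x * (1 + Real.log x)) := by
      refine intervalIntegral.integral_congr fun x hx => ?_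
      rw [Set.uIcc_of_le θ1.le] at hx
      simp only [ldH, max_eq_left hx.1]
    rw [hc, intervalIntegral.integral_eq_sub_of_hasDerivAt hd]
    · rw [hθ, Real.log_exp, Real.log_one]; simp
    · refine ContinuousOn.intervalIntegrable ?_
      rw [Set.uIcc_of_le θ1.le]
      have lc : ContinuousOn Real.log (Set.Icc θ 1) := Real.continuousOn_log.mono (fun x hx => by
        have := θ0.trans_le hx.1
        simp; exact this.ne')
      refine ContinuousOn.div continuousOn_const (continuousOn_id.mul (continuousOn_const.add lc)) ?_
      intro x hx
      have a := l0 x hx.1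
      have b := θ0.trans_le hx.1
      exact mul_ne_zero b.ne' (by linarith)

lemma ldW_eq (v : ℕ → ℝ) (ε : ℝ) (h0 : 0 < ε) (h1 : ε < 1) (n : ℕ) (hn : 0 < n) :
    ldW v n ((Set.Ioi (Real.exp (-(1 - ε)))).indicator (ldH (Real.exp (-(1 - ε))))) =
    Real.log n * ∑ j ∈ (Finset.range (n+1)).filter (fun j : ℕ => ε < ((n:ℝ) - j) / n), 
      v j * (1 / ((n:ℝ) - j)) := by
  have hn' : (0:ℝ) < n := by exact_mod_cast hn
  have e : ∀ j : ℕ, Real.exp (-(1 / (n:ℝ))) ^ j = Real.exp (-(j / (n:ℝ))) := fun j => by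
    rw [← Real.exp_nat_mul]; congr 1; ring
  have iff : ∀ j : ℕ, ε < ((n:ℝ) - j) / n ↔ Real.exp (-(1 - ε)) < Real.exp (-(j / (n:ℝ))) := by
    intro j
    rw [Real.exp_lt_exp, sub_div, div_self hn'.ne']
    constructor <;> intro <;> linarith
  unfold ldW
  simp only [e]
  rw [tsum_eq_sum (s := (Finset.range (n+1)).filter (fun j : ℕ => ε < ((n:ℝ) - j) / n)), div_mul_eq_mul_div,
    mul_div_assoc, Finset.sum_div]
  · congr 1
    refine Finset.sum_congr rfl fun j hj => ?_
    have hj' := (Finset.mem_filter.1 hj).2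
    have hp := (lt_div_iff₀ hn').1 hj'
    have hp2 : 0 < (n:ℝ) - j := by nlinarith
    rw [iff] at hj'
    rw [Set.indicator_of_mem (by exact hj'), ldH, max_eq_left hj'.le, Real.log_exp]
    have := Real.exp_pos (-((j:ℝ) / n))
    have e2 : (1 + -((j:ℝ) / n)) = (n - j) / n := by field_simp; ring
    rw [e2]
    field_simp
  · intro j hj
    have : ¬ (ε < ((n:ℝ) - j) / n) := by
      intro h
      apply hj
      refine Finset.mem_filter.2 ⟨?_, h⟩
      have hp := (lt_div_iff₀ hn').1 h
      have : (j:ℝ) < n := by nlinarith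
      have : j < n := by exact_mod_cast this
      simp; omega
    rw [iff] at this
    rw [Set.indicator_of_notMem (by simpa using this), mul_zero]

theorem ld_analytic (v : ℕ → ℝ) (hv : ∀ j, 0 ≤ v j) (p : ℕ → ℕ → ℝ)
    (hp1 : ∀ n j, j ≤ n → v j * (1 / (((n - j : ℕ) : ℝ) + 2)) ≤ p n j)
    (hp2 : ∀ n j, j ≤ n → p n j ≤ v j * (1 / (((n - j : ℕ) : ℝ) + 1)))
    (hp : ∀ n, ∑ j ∈ Finset.range (n+1), p n j = 1)
    (ε : ℝ) (h0 : 0 < ε) (h1 : ε < 1) :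
    Tendsto (fun n : ℕ => Real.log n *
      ∑ j ∈ (Finset.range (n+1)).filter (fun j : ℕ => ε < ((n:ℝ) - j) / n), p n j) atTop
      (nhds (- Real.log ε)) := by
  have H1 : ∀ n : ℕ, ∑ j ∈ Finset.range (n+1), v j * (1 / (((n - j : ℕ) : ℝ) + 2)) ≤ 1 := by
    intro n
    refine le_trans ?_ (hp n).le
    exact Finset.sum_le_sum fun j hj => hp1 n j (by simp at hj; omega)
  have H2 : ∀ n : ℕ, 1 ≤ ∑ j ∈ Finset.range (n+1), v j * (1 / (((n - j : ℕ) : ℝ) + 1)) := by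
    intro n
    refine le_trans (hp n).ge ?_
    exact Finset.sum_le_sum fun j hj => hp2 n j (by simp at hj; omega)
  obtain ⟨a1, a2, a3, a4⟩ := ldH_facts ε h0 h1
  have T := ldW_ind v hv H1 H2 _ a1 _ a2 a3 (Real.exp (-(1 - ε))) (Real.exp_pos _)
    (by rw [Real.exp_lt_one_iff]; linarith)
  rw [a4] at T
  have T2 : Tendsto (fun n : ℕ => 1 / (1 + 2 / ε / (n:ℝ))) atTop (nhds 1) := by
    have := (tendsto_const_nhds (x := (1:ℝ))).div ((tendsto_const_div_atTop_nhds_zero_nat (2/ε)).const_add 1) (by simp)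
    rw [add_zero, div_one] at this
    exact this
  have T3 := T2.mul T
  rw [one_mul] at T3
  refine tendsto_of_tendsto_of_tendsto_of_le_of_le' T3 T ?_ ?_
  · filter_upwards [eventually_gt_atTop 0] with n hn
    have hn' : (0:ℝ) < n := by exact_mod_cast hn
    rw [ldW_eq v ε h0 h1 n hn, mul_left_comm]
    refine mul_le_mul_of_nonneg_left ?_ (Real.log_natCast_nonneg n)
    rw [Finset.mul_sum]
    refine Finset.sum_le_sum fun j hj => ?_
    obtain ⟨hj1, hj2⟩ := Finset.mem_filter.1 hj
    have hjn : j ≤ n := by simp at hj1; omega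
    refine le_trans ?_ (hp1 n j hjn)
    rw [mul_left_comm]
    refine mul_le_mul_of_nonneg_left ?_ (hv j)
    rw [Nat.cast_sub hjn]
    have hq := (lt_div_iff₀ hn').1 hj2
    have hq2 : 0 < (n:ℝ) - j := by nlinarith
    rw [one_div_mul_one_div]
    refine one_div_le_one_div_of_le (by linarith) ?_
    have : 2 ≤ 2 / ε / n * ((n:ℝ) - j) := by
      rw [div_div, div_mul_eq_mul_div, le_div_iff₀ (by positivity)]
      linarith
    linarith
  · filter_upwards [eventually_gt_atTop 0] with n hn
    have hn' : (0:ℝ) < n := by exact_mod_cast hn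
    rw [ldW_eq v ε h0 h1 n hn]
    refine mul_le_mul_of_nonneg_left ?_ (Real.log_natCast_nonneg n)
    refine Finset.sum_le_sum fun j hj => ?_
    obtain ⟨hj1, hj2⟩ := Finset.mem_filter.1 hj
    have hjn : j ≤ n := by simp at hj1; omega
    refine (hp2 n j hjn).trans ?_
    refine mul_le_mul_of_nonneg_left ?_ (hv j)
    rw [Nat.cast_sub hjn]
    have hq := (lt_div_iff₀ hn').1 hj2
    have hq2 : 0 < (n:ℝ) - j := by nlinarith
    exact one_div_le_one_div_of_le hq2 (by linarith)

/-- Irrational points of `(0,1)`. -/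
def ldΩ : Set ℝ := {x | 0 < x ∧ x < 1 ∧ Irrational x}

/-- First digit. -/
noncomputable def ldDig (x : ℝ) : ℕ := (⌊1 / x⌋).toNat

lemma ldDig_spec {x : ℝ} (hx : x ∈ ldΩ) : 1 ≤ ldDig x ∧ gaussMap x ∈ ldΩ ∧
    x = 1 / ((ldDig x : ℝ) + gaussMap x) := by
  obtain ⟨h0, h1, hi⟩ := hx
  have f1 : (1:ℤ) ≤ ⌊1 / x⌋ := by
    rw [Int.le_floor]; push_cast; rw [le_div_iff₀ h0]; linarith
  have hg : gaussMap x = Int.fract (1 / x) := by simp [gaussMap, h0.ne']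
  have hc : ((ldDig x : ℕ) : ℤ) = ⌊1 / x⌋ := by
    unfold ldDig; rw [Int.toNat_of_nonneg (by linarith)]
  have hcr : (ldDig x : ℝ) = ((⌊1 / x⌋ : ℤ) : ℝ) := by rw [← hc]; simp
  have hinv : Irrational (1 / x) := by rw [one_div]; exact hi.inv
  have hfr : Irrational (gaussMap x) := by
    rw [hg, Int.fract]; exact hinv.sub_intCast _
  refine ⟨by omega, ⟨?_, ?_, hfr⟩, ?_⟩
  · rw [hg]
    refine lt_of_le_of_ne (Int.fract_nonneg _) ?_
    intro h; rw [hg, ← h] at hfr; exact not_irrational_zero hfr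
  · rw [hg]; exact Int.fract_lt_one _
  · rw [hcr, hg, Int.floor_add_fract, one_div_one_div]

lemma ldDig_inv {y : ℝ} (hy : y ∈ ldΩ) {a : ℕ} (ha : 1 ≤ a) :
    1 / ((a:ℝ) + y) ∈ ldΩ ∧ ldDig (1 / ((a:ℝ) + y)) = a ∧ gaussMap (1 / ((a:ℝ) + y)) = y := by
  obtain ⟨h0, h1, hi⟩ := hy
  have ha' : (1:ℝ) ≤ a := by exact_mod_cast ha
  have hp : 0 < 1 / ((a:ℝ) + y) := by positivity
  have fl : ⌊(a:ℝ) + y⌋ = a := by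
    rw [Int.floor_eq_iff]; push_cast; constructor <;> linarith
  refine ⟨⟨hp, ?_, ?_⟩, ?_, ?_⟩
  · rw [div_lt_one (by positivity)]; linarith
  · rw [one_div]; exact (hi.natCast_add a).inv
  · unfold ldDig; rw [one_div_one_div, fl]; simp
  · simp only [gaussMap, hp.ne', if_false]
    rw [one_div_one_div, Int.fract, fl]; simp

lemma ldΩ_iter {x : ℝ} (hx : x ∈ ldΩ) (k : ℕ) : gaussMap^[k] x ∈ ldΩ := by
  induction k with
  | zero => exact hx
  | succ k ih => rw [Function.iterate_succ_apply']; exact (ldDig_spec ih).2.1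

lemma ldS_succ (x : ℝ) (k : ℕ) :
    cfDigitSum x (k+1) = cfDigitSum x k + ldDig (gaussMap^[k] x) := by
  unfold cfDigitSum ldDig; rw [Finset.sum_range_succ]

lemma ldS_mono {x : ℝ} (hx : x ∈ ldΩ) : StrictMono (cfDigitSum x) := by
  refine strictMono_nat_of_lt_succ fun k => ?_
  rw [ldS_succ]
  have := (ldDig_spec (ldΩ_iter hx k)).1
  omega

/-- Points whose digit sums hit `j`, with the remaining tail in `B`. -/
def ldE (j : ℕ) (B : Set ℝ) : Set ℝ :=
  {x | x ∈ ldΩ ∧ ∃ k, cfDigitSum x k = j ∧ gaussMap^[k] x ∈ B}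

/-- Inverse branch. -/
noncomputable def ldφ (a : ℕ) (y : ℝ) : ℝ := 1 / ((a:ℝ) + y)

lemma ldE_zero {B : Set ℝ} (hB : B ⊆ ldΩ) : ldE 0 B = B := by
  ext x; constructor
  · rintro ⟨hx, k, hk, hb⟩
    have : k = 0 := (ldS_mono hx).injective (by rw [hk]; simp [cfDigitSum])
    subst this; exact hb
  · intro hx; exact ⟨hB hx, 0, by simp [cfDigitSum], hx⟩

lemma ldφ_sub {B : Set ℝ} (hB : B ⊆ ldΩ) {a : ℕ} (ha : 1 ≤ a) : ldφ a '' B ⊆ ldΩ := by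
  rintro _ ⟨y, hy, rfl⟩; exact (ldDig_inv (hB hy) ha).1

lemma ldE_step {B : Set ℝ} (hB : B ⊆ ldΩ) {n i : ℕ} (hi : i < n + 1) {x : ℝ}
    (hx : x ∈ ldE i (ldφ (n + 1 - i) '' B)) :
    ∃ k, cfDigitSum x k = i ∧ cfDigitSum x (k+1) = n + 1 ∧ gaussMap^[k+1] x ∈ B := by
  obtain ⟨hΩ, k, hk, y, hy, hyx⟩ := hx
  obtain ⟨-, b, c⟩ := ldDig_inv (hB hy) (a := n + 1 - i) (by omega)
  unfold ldφ at hyx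
  rw [hyx] at b c
  refine ⟨k, hk, ?_, ?_⟩
  · rw [ldS_succ, b, hk]; omega
  · rw [Function.iterate_succ_apply', c]; exact hy

lemma ldE_succ {B : Set ℝ} (hB : B ⊆ ldΩ) (n : ℕ) :
    ldE (n+1) B = ⋃ i : Fin (n+1), ldE i (ldφ (n + 1 - i) '' B) := by
  ext x
  rw [Set.mem_iUnion]; constructor
  · rintro ⟨hx, k, hk, hb⟩
    cases k with
    | zero => simp [cfDigitSum] at hk
    | succ k =>
      obtain ⟨d1, d2, d3⟩ := ldDig_spec (ldΩ_iter hx k)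
      rw [ldS_succ] at hk
      refine ⟨⟨cfDigitSum x k, by omega⟩, hx, k, rfl, gaussMap^[k+1] x, hb, ?_⟩
      have : n + 1 - cfDigitSum x k = ldDig (gaussMap^[k] x) := by omega
      simp only [this]
      rw [Function.iterate_succ_apply']
      exact d3.symm
  · rintro ⟨i, hx⟩
    obtain ⟨k, -, h2, h3⟩ := ldE_step hB i.2 hx
    exact ⟨hx.1, k+1, h2, h3⟩

lemma ldE_disj {B : Set ℝ} (hB : B ⊆ ldΩ) (n : ℕ) :
    Pairwise (Function.onFun Disjoint fun i : Fin (n+1) => ldE i (ldφ (n + 1 - i) '' B)) := by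
  intro i j hij
  rw [Function.onFun, Set.disjoint_left]
  intro x hx hx'
  obtain ⟨k, h1, h2, -⟩ := ldE_step hB i.2 hx
  obtain ⟨l, hl1, hl2, -⟩ := ldE_step hB j.2 hx'
  have := (ldS_mono hx.1).injective (h2.trans hl2.symm)
  have : k = l := by omega
  subst this
  exact hij (Fin.ext (h1.symm.trans hl1))

/-- Density of the sum-level renewal measure. -/
noncomputable def ldF : ℕ → ℝ → ℝ
  | 0, _ => 1
  | n+1, y => ∑ i : Fin (n+1), (1 / (((n + 1 - i : ℕ) : ℝ) + y)) ^ 2 * ldF i (ldφ (n + 1 - i) y)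
termination_by n => n

lemma ldF_zero (y : ℝ) : ldF 0 y = 1 := by rw [ldF]
lemma ldF_succ (n : ℕ) (y : ℝ) : ldF (n+1) y =
    ∑ i : Fin (n+1), (1 / (((n + 1 - i : ℕ) : ℝ) + y)) ^ 2 * ldF i (ldφ (n + 1 - i) y) := by
  rw [ldF]

lemma ldφ_meas (a : ℕ) : Measurable (ldφ a) := by unfold ldφ; fun_prop

lemma ldF_meas (n : ℕ) : Measurable (ldF n) := by
  induction n using Nat.strong_induction_on with
  | _ n ih =>
    cases n with
    | zero => 
      have : ldF 0 = fun _ => 1 := funext ldF_zero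
      rw [this]; exact measurable_const
    | succ n =>
      have : ldF (n+1) = _ := funext (ldF_succ n)
      rw [this]
      refine Finset.measurable_sum _ fun i _ => ?_
      exact Measurable.mul (by fun_prop) ((ih i i.2).comp (ldφ_meas _))

lemma ldF_nonneg (n : ℕ) (y : ℝ) : 0 ≤ ldF n y := by
  induction n using Nat.strong_induction_on generalizing y with
  | _ n ih =>
    cases n with
    | zero => rw [ldF_zero]; exact zero_le_one
    | succ n =>
      rw [ldF_succ]
      exact Finset.sum_nonneg fun i _ => mul_nonneg (sq_nonneg _) (ih i i.2 _)

lemma ldF_shape (n : ℕ) : ∀ y z : ℝ, 0 ≤ y → y ≤ z →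
    ldF n z ≤ ldF n y ∧ (1 + y) ^ 2 * ldF n y ≤ (1 + z) ^ 2 * ldF n z := by
  induction n using Nat.strong_induction_on with
  | _ n ih =>
    intro y z hy hyz
    cases n with
    | zero => 
      simp only [ldF_zero]
      refine ⟨le_rfl, ?_⟩
      gcongr
    | succ n =>
      rw [ldF_succ, ldF_succ, Finset.mul_sum, Finset.mul_sum]
      have key : ∀ i : Fin (n+1), ∃ a : ℝ, ((n + 1 - i : ℕ) : ℝ) = a ∧ 1 ≤ a := by
        intro i; refine ⟨_, rfl, ?_⟩
        have : 1 ≤ n + 1 - (i:ℕ) := by omega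
        exact_mod_cast this
      constructor
      · refine Finset.sum_le_sum fun i _ => ?_
        obtain ⟨a, e, ha⟩ := key i
        have ha0 : 0 < a := by linarith
        have hz : 0 ≤ z := hy.trans hyz
        unfold ldφ
        rw [e]
        have := (ih i i.2 (1 / (a + z)) (1 / (a + y)) (by positivity)
          (one_div_le_one_div_of_le (by positivity) (by linarith))).2
        have e1 : ∀ t : ℝ, 0 ≤ t → ∀ F : ℝ, (1 / (a + t)) ^ 2 * F =
            (1 / (a + t + 1)) ^ 2 * ((1 + 1 / (a + t)) ^ 2 * F) := by
          intro t ht F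
          have : 0 < a + t := by positivity
          field_simp
        rw [e1 z (hy.trans hyz), e1 y hy]
        refine mul_le_mul ?_ this (mul_nonneg (sq_nonneg _) (ldF_nonneg _ _)) (sq_nonneg _)
        gcongr
      · refine Finset.sum_le_sum fun i _ => ?_
        obtain ⟨a, e, ha⟩ := key i
        have ha0 : 0 < a := by linarith
        have hz : 0 ≤ z := hy.trans hyz
        unfold ldφ
        rw [e]
        have := (ih i i.2 (1 / (a + z)) (1 / (a + y)) (by positivity)
          (one_div_le_one_div_of_le (by positivity) (by linarith))).1
        rw [← mul_assoc, ← mul_assoc]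
        refine mul_le_mul ?_ this (ldF_nonneg _ _) (by positivity)
        rw [← mul_pow, ← mul_pow]
        refine pow_le_pow_left₀ (by positivity) ?_ 2
        rw [mul_one_div, mul_one_div, div_le_div_iff₀ (by positivity) (by positivity)]
        nlinarith

lemma ldφ_inj {B : Set ℝ} {a : ℕ} : Set.InjOn (ldφ a) B := by
  intro y hy z hz h
  unfold ldφ at h
  rw [one_div, one_div, inv_inj] at h
  linarith

lemma ldφ_deriv {B : Set ℝ} (hB : B ⊆ ldΩ) {a : ℕ} (y : ℝ) (hy : y ∈ B) :
    HasDerivWithinAt (ldφ a) (-(1 / ((a:ℝ) + y)) ^ 2) B y := by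
  have h0 := (hB hy).1
  have hne : (a:ℝ) + y ≠ 0 := by positivity
  have := ((hasDerivAt_id y).const_add (a:ℝ)).inv hne
  refine (HasDerivAt.hasDerivWithinAt ?_)
  have e1 : ldφ a = (fun x => (a:ℝ) + id x)⁻¹ := by
    ext t; simp [ldφ]
  have e2 : -(1 / ((a:ℝ) + y)) ^ 2 = -1 / ((a:ℝ) + id y) ^ 2 := by
    simp [neg_div]
  rw [e1, e2]
  exact this

lemma ldφ_image_meas {B : Set ℝ} (hB : B ⊆ ldΩ) (hm : MeasurableSet B) {a : ℕ} :
    MeasurableSet (ldφ a '' B) :=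
  hm.image_of_continuousOn_injOn (fun y hy => (ldφ_deriv hB y hy).continuousWithinAt) ldφ_inj

lemma ldE_measure (n : ℕ) : ∀ B : Set ℝ, B ⊆ ldΩ → MeasurableSet B →
    MeasurableSet (ldE n B) ∧ volume (ldE n B) = ∫⁻ y in B, ENNReal.ofReal (ldF n y) := by
  induction n using Nat.strong_induction_on with
  | _ n ih =>
    intro B hB hm
    cases n with
    | zero => 
      rw [ldE_zero hB]
      simp [ldF_zero, hm]
    | succ n =>
      have sub : ∀ i : Fin (n+1), ldφ (n + 1 - i) '' B ⊆ ldΩ := fun i => ldφ_sub hB (by omega)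
      have mi : ∀ i : Fin (n+1), MeasurableSet (ldφ (n + 1 - i) '' B) :=
        fun i => ldφ_image_meas hB hm
      have ih' := fun i : Fin (n+1) => ih i i.2 _ (sub i) (mi i)
      rw [ldE_succ hB]
      refine ⟨MeasurableSet.iUnion fun i => (ih' i).1, ?_⟩
      rw [measure_iUnion (ldE_disj hB n) (fun i => (ih' i).1), tsum_fintype]
      simp only [ldF_succ]
      have : ∀ y, ENNReal.ofReal (∑ i : Fin (n+1), (1 / (((n + 1 - i : ℕ) : ℝ) + y)) ^ 2 * ldF i (ldφ (n + 1 - i) y))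
        = ∑ i : Fin (n+1), ENNReal.ofReal ((1 / (((n + 1 - i : ℕ) : ℝ) + y)) ^ 2 * ldF i (ldφ (n + 1 - i) y)) :=
        fun y => ENNReal.ofReal_sum_of_nonneg fun i _ => mul_nonneg (sq_nonneg _) (ldF_nonneg _ _)
      simp only [this]
      rw [lintegral_finsetSum]
      · refine Finset.sum_congr rfl fun i _ => ?_
        rw [(ih' i).2, lintegral_image_eq_lintegral_abs_deriv_mul hm (ldφ_deriv hB) ldφ_inj]
        refine lintegral_congr fun y => ?_
        rw [ENNReal.ofReal_mul (sq_nonneg _), abs_neg, abs_of_nonneg (sq_nonneg _)]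
      · intro i _
        exact (Measurable.mul (by fun_prop) ((ldF_meas i).comp (ldφ_meas _))).ennreal_ofReal

lemma ldΩ_ae : ldΩ =ᵐ[volume] Set.Ioo (0:ℝ) 1 := by
  have hc : volume (Set.range ((↑) : ℚ → ℝ)) = 0 := (Set.countable_range _).measure_zero _
  have : ∀ᵐ x : ℝ, Irrational x := by
    rw [ae_iff]
    convert hc using 2
    ext x; simp [Irrational]
  filter_upwards [this] with x hx
  apply propext
  constructor
  · intro h; exact ⟨h.1, h.2.1⟩
  · intro h; exact ⟨h.1, h.2, hx⟩

lemma ldΩ_meas : MeasurableSet ldΩ := by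
  have : ldΩ = Set.Ioo (0:ℝ) 1 \ Set.range ((↑) : ℚ → ℝ) := by
    ext x; simp [ldΩ, Irrational, and_assoc]
  rw [this]
  exact measurableSet_Ioo.diff (Set.countable_range _).measurableSet

/-- Tail set: first digit larger than `m`. -/
def ldB (m : ℕ) : Set ℝ := ldΩ ∩ Set.Iio (1 / ((m:ℝ) + 1))

lemma ldB_iff {x : ℝ} (hx : x ∈ ldΩ) (m : ℕ) : x ∈ ldB m ↔ m < ldDig x := by
  obtain ⟨d1, ⟨d2, d3, d4⟩, d5⟩ := ldDig_spec hx
  have d1' : (1:ℝ) ≤ ldDig x := by exact_mod_cast d1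
  unfold ldB
  rw [Set.mem_inter_iff, Set.mem_Iio, and_iff_right hx]
  rw [d5]
  generalize gaussMap x = g at *
  rw [← d5]
  generalize ldDig x = d at *
  rw [d5, one_div_lt_one_div (by positivity) (by positivity)]
  constructor
  · intro h
    have : (m:ℝ) < d := by linarith
    exact_mod_cast this
  · intro h
    have : (m:ℝ) + 1 ≤ d := by exact_mod_cast h
    linarith

lemma ldX_iff {x : ℝ} (hx : x ∈ ldΩ) (n j : ℕ) (hj : j ≤ n) :
    Xproc n x = j ↔ x ∈ ldE j (ldB (n - j)) := by
  have bdd : BddAbove {m : ℕ | m ≤ n ∧ ∃ k : ℕ, cfDigitSum x k = m} := ⟨n, fun m hm => hm.1⟩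
  have ne : {m : ℕ | m ≤ n ∧ ∃ k : ℕ, cfDigitSum x k = m}.Nonempty :=
    ⟨0, Nat.zero_le _, 0, by simp [cfDigitSum]⟩
  constructor
  · intro h
    obtain ⟨-, k, hk⟩ := Nat.sSup_mem ne bdd
    change cfDigitSum x k = Xproc n x at hk
    rw [h] at hk
    refine ⟨hx, k, hk, ?_⟩
    rw [ldB_iff (ldΩ_iter hx k)]
    by_contra hcon
    have h1 : cfDigitSum x (k+1) ≤ Xproc n x := le_csSup bdd ⟨by rw [ldS_succ]; omega, k+1, rfl⟩
    have := ldS_mono hx (Nat.lt_succ_self k)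
    rw [Nat.succ_eq_add_one] at this
    omega
  · rintro ⟨-, k, hk, hb⟩
    rw [ldB_iff (ldΩ_iter hx k)] at hb
    have hk1 := ldS_succ x k
    apply le_antisymm
    · refine csSup_le ne ?_
      rintro m ⟨hm, l, rfl⟩
      rw [← hk]
      apply (ldS_mono hx).monotone
      by_contra hcon
      have := (ldS_mono hx).monotone (show k + 1 ≤ l by omega)
      omega
    · exact le_csSup bdd ⟨hj, k, hk⟩

lemma ldX_le (n : ℕ) (x : ℝ) : Xproc n x ≤ n :=
  csSup_le (s := {m : ℕ | m ≤ n ∧ ∃ k : ℕ, cfDigitSum x k = m})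
    ⟨0, Nat.zero_le _, 0, by simp [cfDigitSum]⟩ fun _ hm => hm.1

/-- Probability that `X_n = j`. -/
noncomputable def ldp (n j : ℕ) : ℝ := (volume (ldE j (ldB (n - j)))).toReal

lemma ldB_meas (m : ℕ) : MeasurableSet (ldB m) := ldΩ_meas.inter measurableSet_Iio

lemma ldB_sub (m : ℕ) : ldB m ⊆ ldΩ := Set.inter_subset_left

lemma ldB_ae (m : ℕ) : ldB m =ᵐ[volume] Set.Ioo (0:ℝ) (1 / ((m:ℝ) + 1)) := by
  have h := ldΩ_ae.inter (ae_eq_refl (Set.Iio (1 / ((m:ℝ) + 1))))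
  have : Set.Ioo (0:ℝ) 1 ∩ Set.Iio (1 / ((m:ℝ) + 1)) = Set.Ioo (0:ℝ) (1 / ((m:ℝ) + 1)) := by
    rw [Set.Ioo_inter_Iio, min_eq_right]
    rw [div_le_one (by positivity)]
    have : (0:ℝ) ≤ m := by positivity
    linarith
  rw [this] at h
  exact h

lemma ldp_bounds (n j : ℕ) :
    ldF j 0 * (1 / (((n - j : ℕ) : ℝ) + 2)) ≤ ldp n j ∧
    ldp n j ≤ ldF j 0 * (1 / (((n - j : ℕ) : ℝ) + 1)) := by
  unfold ldp
  rw [(ldE_measure j _ (ldB_sub _) (ldB_meas _)).2, setLIntegral_congr (ldB_ae _)]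
  generalize n - j = m
  set t : ℝ := 1 / ((m:ℝ) + 1) with ht
  have t0 : 0 < t := by positivity
  have v0 := ldF_nonneg j 0
  have up : ∫⁻ y in Set.Ioo (0:ℝ) t, ENNReal.ofReal (ldF j y) ≤ ENNReal.ofReal (ldF j 0 * t) := by
    calc _ ≤ ∫⁻ y in Set.Ioo (0:ℝ) t, ENNReal.ofReal (ldF j 0) := by
          refine setLIntegral_mono' measurableSet_Ioo fun y hy => ?_
          exact ENNReal.ofReal_le_ofReal (ldF_shape j 0 y le_rfl hy.1.le).1
      _ = _ := by
          rw [setLIntegral_const, Real.volume_Ioo, sub_zero, ENNReal.ofReal_mul v0]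
  have e : 1 / ((m:ℝ) + 2) = t / (1 + t) := by rw [ht]; field_simp; ring
  have lo : ENNReal.ofReal (ldF j 0 * (1 / ((m:ℝ) + 2))) ≤
      ∫⁻ y in Set.Ioo (0:ℝ) t, ENNReal.ofReal (ldF j y) := by
    have hc : ContinuousOn (fun y : ℝ => ldF j 0 * (1 / (1 + y) ^ 2)) (Set.Icc 0 t) := by
      refine ContinuousOn.mul continuousOn_const (ContinuousOn.div continuousOn_const (by fun_prop) ?_)
      intro y hy; have := hy.1; positivity
    have hI : ∫ y in Set.Ioo (0:ℝ) t, ldF j 0 * (1 / (1 + y) ^ 2) = ldF j 0 * (1 / ((m:ℝ) + 2)) := by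
      rw [← integral_Ioc_eq_integral_Ioo, ← intervalIntegral.integral_of_le t0.le]
      rw [intervalIntegral.integral_const_mul]
      congr 1
      rw [intervalIntegral.integral_eq_sub_of_hasDerivAt (f := fun y : ℝ => - (1 + y)⁻¹)]
      · rw [e]; field_simp; ring
      · intro y hy
        rw [Set.uIcc_of_le t0.le] at hy
        have := hy.1
        have hd := (((hasDerivAt_id y).const_add 1).inv (by simp only [id]; positivity)).neg
        have e2 : 1 / (1 + y) ^ 2 = -(-1 / (1 + id y) ^ 2) := by simp [neg_div]
        rw [e2]
        exact hd
      · refine ContinuousOn.intervalIntegrable ?_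
        rw [Set.uIcc_of_le t0.le]
        refine ContinuousOn.div continuousOn_const (by fun_prop) ?_
        intro y hy; have := hy.1; positivity
    rw [← hI, ofReal_integral_eq_lintegral_ofReal]
    · refine setLIntegral_mono' measurableSet_Ioo fun y hy => ?_
      refine ENNReal.ofReal_le_ofReal ?_
      have := (ldF_shape j 0 y le_rfl hy.1.le).2
      have hy0 := hy.1
      rw [mul_one_div, div_le_iff₀ (by positivity)]
      linarith
    · exact hc.integrableOn_Icc.mono_set Set.Ioo_subset_Icc_self
    · exact Eventually.of_forall fun y => by positivity
  have fin := (up.trans_lt ENNReal.ofReal_lt_top).ne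
  constructor
  · rwa [← ENNReal.ofReal_le_iff_le_toReal fin]
  · exact ENNReal.toReal_le_of_le_ofReal (by positivity) up

lemma ld_event (n : ℕ) (s : Finset ℕ) (hs : ∀ j ∈ s, j ≤ n) :
    (volume {x ∈ Set.Icc (0:ℝ) 1 | Xproc n x ∈ s}).toReal = ∑ j ∈ s, ldp n j := by
  have e1 : ({x ∈ Set.Icc (0:ℝ) 1 | Xproc n x ∈ s} : Set ℝ) =ᵐ[volume]
      ⋃ j ∈ s, ldE j (ldB (n - j)) := by
    have h := (Ioo_ae_eq_Icc (μ := volume) (a := (0:ℝ)) (b := 1)).symm.trans ldΩ_ae.symm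
    have h2 := ae_eq_set_inter h (ae_eq_refl {x | Xproc n x ∈ s})
    suffices h3 : ldΩ ∩ {x | Xproc n x ∈ s} = ⋃ j ∈ s, ldE j (ldB (n - j)) by
      rw [← h3]; exact h2
    ext x
    rw [Set.mem_inter_iff]
    simp only [Set.mem_iUnion, exists_prop]
    constructor
    · rintro ⟨hx, h⟩
      exact ⟨_, h, (ldX_iff hx n _ (ldX_le n x)).1 rfl⟩
    · rintro ⟨j, hj, h⟩
      refine ⟨h.1, ?_⟩
      change Xproc n x ∈ s
      rw [(ldX_iff h.1 n j (hs j hj)).2 h]; exact hj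
  have mE : ∀ j, MeasurableSet (ldE j (ldB (n - j))) := fun j =>
    (ldE_measure j _ (ldB_sub _) (ldB_meas _)).1
  rw [measure_congr e1, measure_biUnion_finset _ (fun j _ => mE j), ENNReal.toReal_sum]
  · rfl
  · intro j hj
    refine ((measure_mono (show _ ⊆ Set.Ioo (0:ℝ) 1 from fun x hx => ⟨hx.1.1, hx.1.2.1⟩)).trans_lt ?_).ne
    simp
  · intro i hi j hj hij
    rw [Function.onFun, Set.disjoint_left]
    intro x hxi hxj
    exact hij (((ldX_iff hxi.1 n i (hs i hi)).2 hxi).symm.trans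
      ((ldX_iff hxj.1 n j (hs j hj)).2 hxj))

/-- Large deviation law: for every `ε ∈ (0,1)`,
`λ({x : (n - Xₙ(x))/n > ε}) ∼ (-log ε)/log n` as `n → ∞`. -/
theorem large_deviation_law_for_digit_sums (ε : ℝ) (hε : ε ∈ Set.Ioo (0 : ℝ) 1) :
    Tendsto (fun n : ℕ =>
        (volume {x ∈ Set.Icc (0 : ℝ) 1 |
          ε < ((n : ℝ) - (Xproc n x : ℝ)) / n}).toReal /
          ((-Real.log ε) / Real.log n))
      atTop (nhds 1) := by
  obtain ⟨h0, h1⟩ := hε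
  have T := ld_analytic (fun j => ldF j 0) (fun j => ldF_nonneg j 0) ldp
    (fun n j _ => (ldp_bounds n j).1) (fun n j _ => (ldp_bounds n j).2)
    (fun n => by
      rw [← ld_event n (Finset.range (n+1)) (fun j hj => by simp at hj; omega)]
      have : {x ∈ Set.Icc (0:ℝ) 1 | Xproc n x ∈ Finset.range (n+1)} = Set.Icc (0:ℝ) 1 := by
        ext x
        constructor
        · intro h; exact h.1
        · intro h
          refine ⟨h, ?_⟩
          have := ldX_le n x
          simp; omega
      rw [this]; simp) ε h0 h1
  have hl : -Real.log ε ≠ 0 := by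
    have := Real.log_neg h0 h1
    linarith
  have T2 := T.div_const (-Real.log ε)
  rw [div_self hl] at T2
  refine T2.congr fun n => ?_
  rw [← ld_event n _ (fun j hj => by
    have := (Finset.mem_filter.1 hj).1; simp at this; omega)]
  have : {x ∈ Set.Icc (0:ℝ) 1 | Xproc n x ∈
      (Finset.range (n+1)).filter (fun j : ℕ => ε < ((n:ℝ) - j) / n)} =
      {x ∈ Set.Icc (0 : ℝ) 1 | ε < ((n : ℝ) - (Xproc n x : ℝ)) / n} := by
    ext x
    constructor
    · rintro ⟨h, h'⟩
      exact ⟨h, (Finset.mem_filter.1 h').2⟩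
    · rintro ⟨h, h'⟩
      refine ⟨h, Finset.mem_filter.2 ⟨?_, h'⟩⟩
      have := ldX_le n x
      simp; omega
  rw [this, div_div_eq_mul_div, mul_comm]
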